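/- arXiv:2208.05078 — 2 statements merged into one kernel-verified Lean document; each statement's English description precedes it below -/
import Mathlib

section
/- For each dimension s ≥ 1 there exists a constant C > 0 (depending on s) such that, as N → ∞, |{𝐤 ∈ ℕ₀^s ∖ {0} : ‖𝛋‖₁ = N}| ∼ (C / N^{3/4}) · exp(π√(sN/3)), i.e. the ratio of the two sides tends to 1. -/
open MeasureTheory ProbabilityTheory
open scoped ENNReal

namespace MedianQMC


/-- The set of 0-indexed positions of nonzero binary digits of `k`
(so `κ`, the 1-indexed set from the paper, is the image of this under `·+1`). -/
def bitFinset (k : ℕ) : Finset ℕ := (Finset.range (k+1)).filter (fun i => k.testBit i)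

/-- `‖κ‖₁ = ∑_{ℓ∈κ} ℓ` for the 1-indexed digit set `κ` of `k`. -/
def norm1 (k : ℕ) : ℕ := ∑ i ∈ bitFinset k, (i+1)

/-- `‖𝛋‖₁`. -/
def norm1Vec {s : ℕ} (k : Fin s → ℕ) : ℕ := ∑ j, norm1 (k j)

/-- `‖𝛋‖₀`, the total number of nonzero binary digits. -/
def norm0Vec {s : ℕ} (k : Fin s → ℕ) : ℕ := ∑ j, (bitFinset (k j)).card

/-- `‖⌈𝛋⌉‖₁`; note `⌈κ_j⌉ = Nat.size (k j)`. -/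
def ceilSum {s : ℕ} (k : Fin s → ℕ) : ℕ := ∑ j, Nat.size (k j)

/-- the support `s(𝐤)`. -/
def supp {s : ℕ} (k : Fin s → ℕ) : Finset (Fin s) := Finset.univ.filter (fun j => k j ≠ 0)

/-- Row `i` (0-indexed; paper row `i+1`) of `C j`, as a vector, `0` if out of range. -/
def rowOf {s m : ℕ} (C : Fin s → Matrix (Fin m) (Fin m) (ZMod 2)) (j : Fin s) (i : ℕ) :
    Fin m → ZMod 2 :=
  fun c => if h : i < m then C j ⟨i, h⟩ c else 0

/-- The row space of the stacked matrix `C^{(q)}` consisting of the first `q j` rows of each `C j`. -/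
def rowSpace {s m : ℕ} (C : Fin s → Matrix (Fin m) (Fin m) (ZMod 2)) (q : Fin s → ℕ) :
    Submodule (ZMod 2) (Fin m → ZMod 2) :=
  Submodule.span (ZMod 2) {v | ∃ j i, i < q j ∧ v = rowOf C j i}

/-- The rank of the stacked matrix `C^{(q)}`. -/
noncomputable def stackRank {s m : ℕ} (C : Fin s → Matrix (Fin m) (Fin m) (ZMod 2))
    (q : Fin s → ℕ) : ℕ :=
  Module.finrank (ZMod 2) (rowSpace C q)

/-- `C₁,…,C_s` generate a digital `(t,m,s)`-net in base 2: every stacked matrix `C^{(q)}`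
with `∑ q j = m - t` has full row rank `m - t`.  (Note each row of `C^{(q)}` is a genuine
row since `q j ≤ m - t ≤ m` automatically.) -/
def IsDigitalNet {s m : ℕ} (t : ℕ) (C : Fin s → Matrix (Fin m) (Fin m) (ZMod 2)) : Prop :=
  ∀ q : Fin s → ℕ, (∑ j, q j) = m - t → stackRank C q = m - t

/-- structural constraints of a linear scramble matrix with rows indexed by `ℕ`
(0-indexed; paper row `ℓ` is row `ℓ-1` here): ones on the diagonal, zeros above it. -/
def IsLinearScramble {s m : ℕ} (M : Fin s → ℕ → Fin m → ZMod 2) : Prop :=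
  ∀ j : Fin s, ∀ r : Fin m, M j (r : ℕ) r = 1 ∧ ∀ ℓ : ℕ, ℓ < (r : ℕ) → M j ℓ r = 0

/-- The condition `∑_{j=1}^s k⃗_jᵀ M_j C_j = 0`. -/
def ZeroCond {s m : ℕ} (C : Fin s → Matrix (Fin m) (Fin m) (ZMod 2))
    (M : Fin s → ℕ → Fin m → ZMod 2) (k : Fin s → ℕ) : Prop :=
  ∀ c : Fin m, (∑ j, ∑ i ∈ bitFinset (k j), ∑ r : Fin m, M j i r * C j r c) = 0

/-- index type for the free (random) entries of the scramble matrices: entries strictly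
below the diagonal, i.e. with column index `< ` row index. -/
def FreeIdx (s m : ℕ) : Type := {p : Fin s × ℕ × Fin m // (p.2.2 : ℕ) < p.2.1}

/-- index type for all random bits of a scramble-with-digital-shift. -/
def ScrIdx (s m : ℕ) : Type := FreeIdx s m ⊕ (Fin s × ℕ)

variable {Ω : Type*}

/-- the family of free entries of the random matrices. -/
def freeVar {s m : ℕ} (M : Ω → Fin s → ℕ → Fin m → ZMod 2) : FreeIdx s m → Ω → ZMod 2 :=
  fun p ω => M ω p.1.1 p.1.2.1 p.1.2.2

/-- the family of all random bits of a scramble-with-digital-shift. -/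
def scrVar {s m : ℕ} (M : Ω → Fin s → ℕ → Fin m → ZMod 2)
    (D : Ω → Fin s → ℕ → ZMod 2) : ScrIdx s m → Ω → ZMod 2
  | Sum.inl p => freeVar M p
  | Sum.inr q => fun ω => D ω q.1 q.2

/-- `x = Σ_{ℓ≥1} 2^{−ℓ} y_ℓ` (here `y` is 0-indexed). -/
noncomputable def coordI (y : ℕ → ZMod 2) : ℝ := ∑' ℓ : ℕ, ((y ℓ).val : ℝ) / 2 ^ (ℓ + 1)

/-- finite-precision coordinate `x = Σ_{ℓ=1}^E 2^{−ℓ} y_ℓ`. -/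
noncomputable def coordF (E : ℕ) (y : ℕ → ZMod 2) : ℝ :=
  ∑ ℓ ∈ Finset.range E, ((y ℓ).val : ℝ) / 2 ^ (ℓ + 1)

/-- digit string `M_j C_j ī + D_j` of the scrambled point `x_{ij}`. -/
def scrDigits {s m : ℕ} (C : Fin s → Matrix (Fin m) (Fin m) (ZMod 2))
    (M : Fin s → ℕ → Fin m → ZMod 2) (D : Fin s → ℕ → ZMod 2) (i : ℕ) (j : Fin s) :
    ℕ → ZMod 2 :=
  fun ℓ => (∑ r : Fin m, M j ℓ r * ∑ c : Fin m, C j r c *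
      (if i.testBit (c : ℕ) then 1 else 0)) + D j ℓ

/-- infinite-precision estimator `μ̂_∞ = 2^{-m} ∑_{i=0}^{2^m-1} f(x_i)`. -/
noncomputable def estInf {s m : ℕ} (f : (Fin s → ℝ) → ℝ)
    (C : Fin s → Matrix (Fin m) (Fin m) (ZMod 2))
    (M : Fin s → ℕ → Fin m → ZMod 2) (D : Fin s → ℕ → ZMod 2) : ℝ :=
  ((2 : ℝ) ^ m)⁻¹ * ∑ i ∈ Finset.range (2 ^ m), f (fun j => coordI (scrDigits C M D i j))

/-- precision-`E` estimator `μ̂_E`. -/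
noncomputable def estE {s m : ℕ} (E : ℕ) (f : (Fin s → ℝ) → ℝ)
    (C : Fin s → Matrix (Fin m) (Fin m) (ZMod 2))
    (M : Fin s → ℕ → Fin m → ZMod 2) (D : Fin s → ℕ → ZMod 2) : ℝ :=
  ((2 : ℝ) ^ m)⁻¹ * ∑ i ∈ Finset.range (2 ^ m), f (fun j => coordF E (scrDigits C M D i j))

/-- half-open unit cube `[0,1)^s`. -/
def cube (s : ℕ) : Set (Fin s → ℝ) := Set.univ.pi fun _ => Set.Ico (0:ℝ) 1

/-- closed unit cube `[0,1]^s`. -/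
def cubeC (s : ℕ) : Set (Fin s → ℝ) := Set.univ.pi fun _ => Set.Icc (0:ℝ) 1

/-- `ℓ`-th (0-indexed; paper `ℓ+1`) binary digit of `x ∈ [0,1)`, using the expansion ending
in zeros for dyadic rationals. -/
noncomputable def rdigit (x : ℝ) (i : ℕ) : ℕ := (⌊x * 2 ^ (i+1)⌋).toNat % 2

/-- Walsh function `wal_k`. -/
noncomputable def walsh (k : ℕ) (x : ℝ) : ℝ := (-1 : ℝ) ^ (∑ i ∈ bitFinset k, rdigit x i)

/-- multivariate Walsh function `wal_𝐤`. -/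
noncomputable def walshVec {s : ℕ} (k : Fin s → ℕ) (x : Fin s → ℝ) : ℝ :=
  ∏ j, walsh (k j) (x j)

/-- Walsh coefficient `f̂(𝐤)`. -/
noncomputable def fhat {s : ℕ} (f : (Fin s → ℝ) → ℝ) (k : Fin s → ℕ) : ℝ :=
  ∫ x in cube s, f x * walshVec k x

/-- the sign `(−1)^{Σ_j k⃗_jᵀ D_j}`. -/
noncomputable def walshSign {s : ℕ} (D : Fin s → ℕ → ZMod 2) (k : Fin s → ℕ) : ℝ :=
  (-1 : ℝ) ^ (∑ j, ∑ i ∈ bitFinset (k j), (D j i).val)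

/-- the constant `λ = 3 log(2)²/π²`. -/
noncomputable def lam : ℝ := 3 * Real.log 2 ^ 2 / Real.pi ^ 2

/-- the `i`-th smallest (0-indexed) of the values `v`. -/
noncomputable def orderStat {n : ℕ} (v : Fin n → ℝ) (i : ℕ) : ℝ :=
  (((List.ofFn v).mergeSort fun a b => @decide (a ≤ b) (Classical.propDecidable _)).getD i 0)

end MedianQMC

namespace MedianQMC

/-!
The coefficient of `q ^ N` in `∏ (1 + q ^ n) ^ s` is given by Cauchy's formula on a circle
`q = exp (-τ)`, `re τ = β ^ 2`. Dedekind's inversion `η (-1 / z) = √(z / i) η z` relates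
`∏ (1 + q ^ n)` at `τ` and at `2 π² / τ`, so that its `s`-th power behaves like
`2 ^ (-s / 2) * exp (s π² / (12 τ))` as `τ → 0`. With `β ^ 2` at the saddle point of
`N τ + s π² / (12 τ)` and `im τ = β ^ 3 * u`, the integrand tends to a Gaussian in `u`. Away from
the real axis, `∏ |1 + q ^ n|` is smaller than `∏ (1 + |q| ^ n)` by a factor at most
`exp (-∑ (|q| ^ n - re q ^ n) / 4)`; the geometric series in the exponent makes the integrand
`O (1 / (1 + u ^ 2))` on the whole circle, and dominated convergence concludes.
-/

section DistinctProd

/-- The infinite product `∏_{n ≥ 1} (1 + q ^ n)`, the generating function of partitions into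
distinct parts. It takes a junk value when the product diverges, in particular for large `‖q‖`. -/
noncomputable def distinctProd (q : ℂ) : ℂ := ∏' n : ℕ, (1 + q ^ (n + 1))

lemma summable_norm_pow_succ {q : ℂ} (hq : ‖q‖ < 1) : Summable fun n : ℕ ↦ ‖q ^ (n + 1)‖ := by
  simpa using (summable_nat_add_iff 1).mpr (summable_geometric_of_lt_one (norm_nonneg q) hq)

lemma multipliable_one_add_pow {q : ℂ} (hq : ‖q‖ < 1) :
    Multipliable fun n : ℕ ↦ 1 + q ^ (n + 1) :=
  multipliable_one_add_of_summable (summable_norm_pow_succ hq)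

lemma distinctProd_zero : distinctProd 0 = 1 := by simp [distinctProd]

lemma continuousAt_distinctProd {q : ℂ} (hq : ‖q‖ < 1) : ContinuousAt distinctProd q := by
  obtain ⟨r, hqr, hr⟩ := exists_between hq
  have hr₀ : 0 ≤ r := (norm_nonneg q).trans hqr.le
  have hprod : HasProdLocallyUniformlyOn (fun (n : ℕ) (x : ℂ) ↦ 1 + x ^ (n + 1)) distinctProd
      (Metric.ball 0 r) := by
    refine Summable.hasProdLocallyUniformlyOn_nat_one_add Metric.isOpen_ball
      ((summable_nat_add_iff 1).mpr (summable_geometric_of_lt_one hr₀ hr))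
      (.of_forall fun n x hx ↦ ?_) fun n ↦ by fun_prop
    rw [norm_pow]
    exact pow_le_pow_left₀ (norm_nonneg x) (mem_ball_zero_iff.mp hx).le _
  refine (hprod.continuousOn (.of_forall fun S ↦ ?_)).continuousAt
    (Metric.isOpen_ball.mem_nhds (mem_ball_zero_iff.mpr hqr))
  fun_prop

lemma distinctProd_mul_tprod_one_sub_pow {q : ℂ} (hq : ‖q‖ < 1) :
    distinctProd q * ∏' n : ℕ, (1 - q ^ (n + 1)) = ∏' n : ℕ, (1 - (q ^ 2) ^ (n + 1)) := by
  rw [distinctProd, ← (multipliable_one_add_pow hq).tprod_mul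
    (ModularForm.multipliable_one_sub_pow hq)]
  exact tprod_congr fun n ↦ by ring

end DistinctProd

section Inversion

open Complex
open scoped Real
open UpperHalfPlane (upperHalfPlaneSet)

lemma eta_two_mul {z : ℂ} (hz : z ∈ upperHalfPlaneSet) :
    ModularForm.eta (2 * z) =
      cexp (2 * π * I * z / 24) * distinctProd (cexp (2 * π * I * z)) * ModularForm.eta z := by
  have hq : ‖cexp (2 * π * I * z)‖ < 1 := UpperHalfPlane.norm_exp_two_pi_I_lt_one ⟨z, hz⟩
  have hsq : cexp (2 * π * I * (2 * z)) = cexp (2 * π * I * z) ^ 2 := by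
    rw [← Complex.exp_nat_mul]; push_cast; ring_nf
  simp only [ModularForm.eta, ModularForm.eta_q_eq_pow, Function.Periodic.qParam, hsq]
  rw [← distinctProd_mul_tprod_one_sub_pow hq, show 2 * π * I * (2 * z) / (24 : ℝ) =
    2 * π * I * z / 24 + 2 * π * I * z / (24 : ℝ) by push_cast; ring, Complex.exp_add]
  ring

lemma eta_neg_one_div {z : ℂ} (hz : z ∈ upperHalfPlaneSet) :
    ModularForm.eta (-1 / z) = (sqrt I)⁻¹ * (sqrt z * ModularForm.eta z) :=
  ModularForm.eta_comp_eq_csqrt_I_inv hz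

lemma sqrt_ofReal_mul {x : ℝ} (hx : 0 < x) {z : ℂ} (hz : z ≠ 0) :
    sqrt (x * z) = √x * sqrt z := by
  have hx' : (x : ℂ) ≠ 0 := ofReal_ne_zero.2 hx.ne'
  rw [sqrt, sqrt, cpow_def_of_ne_zero (mul_ne_zero hx' hz), cpow_def_of_ne_zero hz,
    log_ofReal_mul hx hz, add_mul, Complex.exp_add, Real.sqrt_eq_rpow, Real.rpow_def_of_pos hx]
  push_cast
  ring_nf

/-- Weber's modular function `η (2 z) / η z`, used on the upper half-plane, where `η` does not
vanish. -/
noncomputable def weberQuotient (z : ℂ) : ℂ := ModularForm.eta (2 * z) / ModularForm.eta z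

lemma weberQuotient_eq {z : ℂ} (hz : z ∈ upperHalfPlaneSet) :
    weberQuotient z = cexp (2 * π * I * z / 24) * distinctProd (cexp (2 * π * I * z)) := by
  rw [weberQuotient, eta_two_mul hz, mul_div_cancel_right₀ _ (ModularForm.eta_ne_zero hz)]

lemma weberQuotient_mul_inversion {z : ℂ} (hz : z ∈ upperHalfPlaneSet) :
    √2 * (weberQuotient z * weberQuotient (-1 / (2 * z))) = 1 := by
  have hz₀ : z ≠ 0 := by rintro rfl; simp at hz
  have h2z : 2 * z ∈ upperHalfPlaneSet := by simpa using hz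
  have hI : sqrt I ≠ 0 := by simp [sqrt]
  have hsz : sqrt z ≠ 0 := by simp [sqrt, hz₀]
  have hη := ModularForm.eta_ne_zero hz
  have hη₂ := ModularForm.eta_ne_zero h2z
  have h2 : ((√2 : ℝ) : ℂ) ≠ 0 := by simp
  have hsqrt : sqrt (2 * z) = √2 * sqrt z := by simpa using sqrt_ofReal_mul two_pos hz₀
  rw [weberQuotient, weberQuotient, show 2 * (-1 / (2 * z)) = -1 / z by field_simp,
    eta_neg_one_div hz, eta_neg_one_div h2z, hsqrt]
  field_simp

lemma distinctProd_mul_inversion {τ : ℂ} (hτ : 0 < τ.re) :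
    √2 * (distinctProd (cexp (-τ)) * distinctProd (cexp (-(2 * π ^ 2 / τ)))) =
      cexp (τ / 24 + π ^ 2 / (12 * τ)) := by
  have hτ₀ : τ ≠ 0 := by rintro rfl; simp at hτ
  have hπ : (π : ℂ) ≠ 0 := ofReal_ne_zero.2 Real.pi_ne_zero
  have hz : I * τ / (2 * π) ∈ upperHalfPlaneSet := by
    have him : (I * τ / (2 * π)).im = τ.re / (2 * π) := by
      rw [show I * τ / (2 * π) = I * τ / (2 * π : ℝ) by push_cast; rfl, div_ofReal_im]; simp
    simpa [UpperHalfPlane.upperHalfPlaneSet, him] using by positivity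
  have h2z : 2 * (I * τ / (2 * π)) ∈ upperHalfPlaneSet := by simpa using hz
  have hz' : -1 / (2 * (I * τ / (2 * π))) ∈ upperHalfPlaneSet := by
    have him := UpperHalfPlane.im_inv_neg_coe_pos ⟨_, h2z⟩
    rwa [← one_div, ← neg_div_neg_eq, neg_neg] at him
  have harg : 2 * π * I * (I * τ / (2 * π)) = -τ := by
    field_simp
    exact I_sq
  have harg' : 2 * π * I * (-1 / (2 * (I * τ / (2 * π)))) = -(2 * π ^ 2 / τ) := by
    field_simp
  have hexp : cexp (τ / 24 + π ^ 2 / (12 * τ)) * (cexp (-τ / 24) * cexp (-(2 * π ^ 2 / τ) / 24)) =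
      1 := by
    rw [← Complex.exp_add, ← Complex.exp_add, Complex.exp_eq_one_iff]
    exact ⟨0, by field_simp; ring⟩
  have hinv := weberQuotient_mul_inversion hz
  rw [weberQuotient_eq hz, weberQuotient_eq hz', harg, harg'] at hinv
  linear_combination cexp (τ / 24 + π ^ 2 / (12 * τ)) * hinv -
    √2 * distinctProd (cexp (-τ)) * distinctProd (cexp (-(2 * π ^ 2 / τ))) * hexp

end Inversion

section MinorArcs

open Complex
open scoped Real

lemma norm_one_add_le {w : ℂ} (hw : ‖w‖ ≤ 1) :
    ‖1 + w‖ ≤ (1 + ‖w‖) * Real.exp (-(‖w‖ - w.re) / 4) := by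
  have hre : 0 ≤ ‖w‖ - w.re := sub_nonneg.mpr (re_le_norm w)
  have hsq : ‖1 + w‖ ^ 2 = (1 + ‖w‖) ^ 2 - 2 * (‖w‖ - w.re) := by
    rw [add_sq, Complex.sq_norm, Complex.sq_norm, normSq_add]
    simp only [map_one, one_mul, conj_re, one_pow, mul_one]
    ring
  refine (sq_le_sq₀ (norm_nonneg _) (by positivity)).1 ?_
  calc ‖1 + w‖ ^ 2 = (1 + ‖w‖) ^ 2 - 2 * (‖w‖ - w.re) := hsq
    _ ≤ (1 + ‖w‖) ^ 2 * (-(‖w‖ - w.re) / 2 + 1) := by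
      have : (1 + ‖w‖) ^ 2 ≤ 2 ^ 2 := by gcongr; linarith
      nlinarith
    _ ≤ (1 + ‖w‖) ^ 2 * Real.exp (-(‖w‖ - w.re) / 2) := by
      gcongr
      exact Real.add_one_le_exp _
    _ = ((1 + ‖w‖) * Real.exp (-(‖w‖ - w.re) / 4)) ^ 2 := by
      rw [mul_pow, ← Real.exp_nat_mul]
      push_cast
      ring_nf

lemma hasSum_norm_pow_sub_re {q : ℂ} (hq : ‖q‖ < 1) :
    HasSum (fun n : ℕ ↦ ‖q ^ (n + 1)‖ - (q ^ (n + 1)).re) ((1 - ‖q‖)⁻¹ - (1 - q)⁻¹.re) := by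
  simpa using (hasSum_nat_add_iff' 1).2 ((hasSum_geometric_of_lt_one (norm_nonneg q) hq).sub
    (hasSum_re (hasSum_geometric_of_norm_lt_one hq)))

lemma norm_distinctProd_le {q : ℂ} (hq : ‖q‖ < 1) :
    ‖distinctProd q‖ ≤
      ‖distinctProd ‖q‖‖ * Real.exp (-((1 - ‖q‖)⁻¹ - (1 - q)⁻¹.re) / 4) := by
  have hq' : ‖(‖q‖ : ℂ)‖ < 1 := by simpa using hq
  have hexp := (Real.continuous_exp.tendsto _).comp
    ((hasSum_norm_pow_sub_re hq).neg.div_const 4).tendsto_sum_nat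
  refine le_of_tendsto_of_tendsto' (multipliable_one_add_pow hq).hasProd.tendsto_prod_nat.norm
    ((multipliable_one_add_pow hq').hasProd.tendsto_prod_nat.norm.mul hexp) fun M ↦ ?_
  simp only [Function.comp, norm_prod, Real.exp_sum, ← Finset.prod_mul_distrib]
  refine Finset.prod_le_prod (fun _ _ ↦ norm_nonneg _) fun n _ ↦ ?_
  have hnorm : ‖1 + (‖q‖ : ℂ) ^ (n + 1)‖ = 1 + ‖q ^ (n + 1)‖ := by
    rw [norm_pow, ← ofReal_pow, ← ofReal_one, ← ofReal_add, norm_real,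
      Real.norm_of_nonneg (by positivity)]
  rw [hnorm]
  refine norm_one_add_le ?_
  rw [norm_pow]
  exact pow_le_one₀ (norm_nonneg _) hq.le

lemma div_le_inv_one_sub_norm_sub_re {q : ℂ} {α y : ℝ} (hq : ‖q‖ < 1) (hα : 1 - ‖q‖ ≤ α)
    (hy₀ : 0 ≤ y) (hy : y ≤ ‖q‖ - q.re) :
    y / (α * (α ^ 2 + 2 * y)) ≤ (1 - ‖q‖)⁻¹ - (1 - q)⁻¹.re := by
  have hnormSq : normSq (1 - q) = (1 - ‖q‖) ^ 2 + 2 * (‖q‖ - q.re) := by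
    have h := Complex.sq_norm q
    rw [normSq_sub]
    simp only [map_one, one_mul, conj_re]
    linarith
  have hre : (1 - q).re = (1 - ‖q‖) + (‖q‖ - q.re) := by simp
  rw [inv_re, hnormSq, hre]
  set x := ‖q‖ - q.re
  have hε₁ : 1 - ‖q‖ ≤ 1 := sub_le_self _ (norm_nonneg q)
  have hε₀ : 0 < 1 - ‖q‖ := sub_pos.2 hq
  set ε := 1 - ‖q‖
  have hx₀ : 0 ≤ x := hy₀.trans hy
  have hα₀ : 0 < α := hε₀.trans_le hα
  calc y / (α * (α ^ 2 + 2 * y)) ≤ x / (α * (α ^ 2 + 2 * x)) := by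
        rw [div_le_div_iff₀ (by positivity) (by positivity)]
        nlinarith [mul_le_mul_of_nonneg_right hy (by positivity : 0 ≤ α ^ 3)]
    _ ≤ x / (ε * (ε ^ 2 + 2 * x)) := by gcongr
    _ ≤ x * (2 - ε) / (ε * (ε ^ 2 + 2 * x)) := by
        gcongr
        exact le_mul_of_one_le_right hx₀ (by linarith only [hε₁])
    _ = ε⁻¹ - (ε + x) / (ε ^ 2 + 2 * x) := by
        field_simp
        ring

lemma norm_exp_neg_add_mul_I (α θ : ℝ) : ‖cexp (-(α + θ * I))‖ = Real.exp (-α) := by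
  simp [Complex.norm_exp]

lemma sq_div_pi_sq_le_norm_sub_re {α θ : ℝ} (hα : α ≤ 1 / 2) (hθ : |θ| ≤ π) :
    θ ^ 2 / π ^ 2 ≤ ‖cexp (-(α + θ * I))‖ - (cexp (-(α + θ * I))).re := by
  have hre : (cexp (-(α + θ * I))).re = Real.exp (-α) * Real.cos θ := by simp [Complex.exp_re]
  have hexp : 1 / 2 ≤ Real.exp (-α) := by linarith [Real.add_one_le_exp (-α)]
  have hcos : 2 / π ^ 2 * θ ^ 2 ≤ 1 - Real.cos θ := by
    linarith [Real.cos_le_one_sub_mul_cos_sq hθ]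
  rw [norm_exp_neg_add_mul_I, hre]
  calc θ ^ 2 / π ^ 2 = 1 / 2 * (2 / π ^ 2 * θ ^ 2) := by ring
    _ ≤ Real.exp (-α) * (1 - Real.cos θ) := by gcongr
    _ = _ := by ring

lemma sq_le_of_eq_div {β u X : ℝ} (hβu : |β ^ 3 * u| ≤ π)
    (hX : X = u ^ 2 / (π ^ 2 + 2 * β ^ 2 * u ^ 2)) :
    u ^ 2 ≤ 2 * π ^ 2 * X + 64 * π ^ 2 * X ^ 3 := by
  have hX₀ : 0 ≤ X := hX ▸ by positivity
  have hu : u ^ 2 = X * (π ^ 2 + 2 * β ^ 2 * u ^ 2) := by rw [hX]; field_simp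
  rcases le_or_gt (2 * β ^ 2 * u ^ 2) (π ^ 2) with h | h
  · have : 0 ≤ 64 * π ^ 2 * X ^ 3 := by positivity
    nlinarith
  · have hβ : 0 < β ^ 2 := by
      refine (sq_nonneg β).lt_of_ne' fun h₀ ↦ ?_
      rw [h₀] at h
      nlinarith [sq_nonneg π]
    have hβX : 1 ≤ 4 * β ^ 2 * X := by
      rw [hX, mul_div_assoc', le_div_iff₀ (by positivity)]
      linarith
    have hθ : β ^ 6 * u ^ 2 ≤ π ^ 2 := by
      calc β ^ 6 * u ^ 2 = |β ^ 3 * u| ^ 2 := by rw [sq_abs]; ring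
        _ ≤ π ^ 2 := by gcongr
    calc u ^ 2 = 1 ^ 3 * u ^ 2 := by ring
      _ ≤ (4 * β ^ 2 * X) ^ 3 * u ^ 2 := by gcongr
      _ = 64 * X ^ 3 * (β ^ 6 * u ^ 2) := by ring
      _ ≤ 64 * X ^ 3 * π ^ 2 := by gcongr
      _ ≤ 2 * π ^ 2 * X + 64 * π ^ 2 * X ^ 3 := by
        have : 0 ≤ 2 * π ^ 2 * X := by positivity
        linarith

lemma exp_neg_div_four_le {β u : ℝ} (hβu : |β ^ 3 * u| ≤ π) :
    Real.exp (-(u ^ 2 / (π ^ 2 + 2 * β ^ 2 * u ^ 2)) / 4) ≤ 25000 * π ^ 2 * (1 + u ^ 2)⁻¹ := by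
  set X := u ^ 2 / (π ^ 2 + 2 * β ^ 2 * u ^ 2) with hX
  have hX₀ : 0 ≤ X / 4 := by positivity
  have hone : 1 ≤ Real.exp (X / 4) := Real.one_le_exp hX₀
  have hlin : X ≤ 4 * Real.exp (X / 4) := by linarith [Real.add_one_le_exp (X / 4)]
  have hcube : X ^ 3 ≤ 384 * Real.exp (X / 4) := by
    have h := Real.pow_div_factorial_le_exp _ hX₀ 3
    norm_num [Nat.factorial] at h
    linarith
  have hπ : 1 ≤ π ^ 2 := one_le_pow₀ (by linarith [Real.pi_gt_three])
  rw [neg_div, Real.exp_neg, inv_le_comm₀ (Real.exp_pos _) (by positivity), mul_inv,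
    inv_inv, inv_mul_le_iff₀ (by positivity)]
  calc 1 + u ^ 2 ≤ 1 + (2 * π ^ 2 * X + 64 * π ^ 2 * X ^ 3) := by
        gcongr; exact sq_le_of_eq_div hβu hX
    _ ≤ π ^ 2 * Real.exp (X / 4) + (2 * π ^ 2 * (4 * Real.exp (X / 4)) +
        64 * π ^ 2 * (384 * Real.exp (X / 4))) := by
        gcongr; exact one_le_mul_of_one_le_of_one_le hπ hone
    _ ≤ 25000 * π ^ 2 * Real.exp (X / 4) := by
        nlinarith [mul_pos (pow_pos Real.pi_pos 2) (Real.exp_pos (X / 4))]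

end MinorArcs

section GeneratingFunction

variable {R : Type*} [NormedCommRing R] {s : ℕ} {κ : Fin s → Type*} {f : ∀ j, κ j → R}

lemma summable_norm_prod_fin (hf : ∀ j, Summable fun n ↦ ‖f j n‖) :
    Summable fun k : ∀ j, κ j ↦ ‖∏ j, f j (k j)‖ := by
  induction s with
  | zero => exact .of_finite
  | succ s ih =>
    rw [← (Fin.consEquiv κ).summable_iff]
    refine ((hf 0).mul_norm (ih fun j ↦ hf j.succ)).congr fun p ↦ ?_
    simp [Fin.prod_univ_succ, Fin.consEquiv]

lemma hasSum_prod_fin [CompleteSpace R] (hf : ∀ j, Summable fun n ↦ ‖f j n‖) :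
    HasSum (fun k : ∀ j, κ j ↦ ∏ j, f j (k j)) (∏ j, ∑' n, f j n) := by
  induction s with
  | zero => simp
  | succ s ih =>
    let tail (k : ∀ j : Fin s, κ j.succ) : R := ∏ j, f j.succ (k j)
    have htail : Summable fun k ↦ ‖tail k‖ := summable_norm_prod_fin fun j ↦ hf j.succ
    have hprod : Summable fun p : κ 0 × ∀ j : Fin s, κ j.succ ↦ f 0 p.1 * tail p.2 :=
      summable_mul_of_summable_norm (hf 0) htail
    rw [Fin.prod_univ_succ, ← (Fin.consEquiv κ).hasSum_iff]
    refine ((hf 0).of_norm.hasSum.mul (ih fun j ↦ hf j.succ) hprod).congr_fun fun p ↦ ?_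
    simp [Fin.prod_univ_succ, Fin.consEquiv]

lemma norm1_eq_sum_equivBitIndices (k : ℕ) :
    norm1 k = ∑ i ∈ Finset.equivBitIndices k, (i + 1) := by
  refine Finset.sum_congr (Finset.ext fun i ↦ ?_) fun _ _ ↦ rfl
  simp only [bitFinset, Finset.mem_filter, Finset.mem_range, Finset.equivBitIndices_apply,
    List.mem_toFinset, Nat.mem_bitIndices, and_iff_right_iff_imp]
  intro hi
  exact (Nat.lt_two_pow_self.trans_le
    (Nat.two_pow_le_of_mem_bitIndices (Nat.mem_bitIndices.2 hi))).trans_le k.le_succ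

lemma hasSum_pow_norm1 {q : ℂ} (hq : ‖q‖ < 1) :
    HasSum (fun k ↦ q ^ norm1 k) (distinctProd q) := by
  have hsum := summable_finsetProd_of_summable_norm (summable_norm_pow_succ hq)
  have hpow (k : ℕ) : q ^ norm1 k = ∏ i ∈ Finset.equivBitIndices k, q ^ (i + 1) := by
    rw [norm1_eq_sum_equivBitIndices, Finset.prod_pow_eq_pow_sum]
  simp_rw [hpow]
  rw [distinctProd, tprod_one_add hsum]
  exact (Finset.equivBitIndices.hasSum_iff (f := fun S ↦ ∏ i ∈ S, q ^ (i + 1))).2 hsum.hasSum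

lemma hasSum_pow_norm1Vec {q : ℂ} (hq : ‖q‖ < 1) (s : ℕ) :
    HasSum (fun k : Fin s → ℕ ↦ q ^ norm1Vec k) (distinctProd q ^ s) := by
  have h := hasSum_pow_norm1 hq
  simpa [norm1Vec, Finset.prod_pow_eq_pow_sum, h.tsum_eq] using
    hasSum_prod_fin fun _ : Fin s ↦ h.summable.norm

end GeneratingFunction

section CoefficientFormula

open Complex
open scoped Real

lemma integral_exp_pow_mul_exp (m N : ℕ) (α : ℝ) :
    ∫ θ in -π..π, cexp (-(α + θ * I)) ^ m * cexp (N * (α + θ * I)) =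
      if m = N then (2 * π : ℂ) else 0 := by
  have hexp (θ : ℝ) : cexp (-(α + θ * I)) ^ m * cexp (N * (α + θ * I)) =
      cexp ((N - m) * α) * cexp ((N - m) * I * θ) := by
    rw [← Complex.exp_nat_mul, ← Complex.exp_add, ← Complex.exp_add]
    ring_nf
  simp_rw [hexp]
  rw [intervalIntegral.integral_const_mul]
  split_ifs with h
  · subst h
    simp only [sub_self, zero_mul, exp_zero, intervalIntegral.integral_const, sub_neg_eq_add,
      real_smul, ofReal_add, mul_one, one_mul]
    ring
  · have hne : (N - m : ℂ) ≠ 0 := sub_ne_zero.2 (mod_cast Ne.symm h)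
    have hperiod : cexp ((N - m) * I * π) = cexp ((N - m) * I * (-π : ℝ)) :=
      Complex.exp_eq_exp_iff_exists_int.2 ⟨N - m, by push_cast; ring⟩
    rw [integral_exp_mul_complex (mul_ne_zero hne I_ne_zero), hperiod]
    simp

variable {ι : Type*} {w : ι → ℕ}

lemma finite_setOf_eq_of_summable_pow {r : ℝ} (hr : 0 < r) (hw : Summable fun i ↦ r ^ w i)
    (N : ℕ) : {i | w i = N}.Finite := by
  refine (hw.tendsto_cofinite_zero.eventually (gt_mem_nhds (pow_pos hr N))).subset fun i hi ↦ ?_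
  simp [show w i = N from hi]

lemma hasSum_ite_eq_ncard {N : ℕ} (hN : {i | w i = N}.Finite) (c : ℂ) :
    HasSum (fun i ↦ if w i = N then c else 0) ({i | w i = N}.ncard * c) := by
  classical
  have hsum : ∑ i ∈ hN.toFinset, (if w i = N then c else 0) = {i | w i = N}.ncard * c := by
    rw [Finset.sum_congr rfl fun i hi ↦ if_pos (by simpa using hi), Finset.sum_const,
      nsmul_eq_mul, ← Set.ncard_eq_toFinset_card _ hN]
  rw [← hsum]
  exact hasSum_sum_of_ne_finset_zero fun i hi ↦ if_neg (by simpa using hi)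

lemma integral_generatingFunction_mul_exp [Countable ι] {F : ℂ → ℂ} {α : ℝ}
    (hF : ∀ q : ℂ, ‖q‖ = Real.exp (-α) → HasSum (fun i ↦ q ^ w i) (F q)) (N : ℕ) :
    ∫ θ in -π..π, F (cexp (-(α + θ * I))) * cexp (N * (α + θ * I)) =
      {i | w i = N}.ncard * (2 * π) := by
  have hnorm := norm_exp_neg_add_mul_I α
  have hsum : Summable fun i ↦ Real.exp (-α) ^ w i := by
    simpa only [norm_pow, hnorm] using (hF _ (hnorm 0)).summable.norm
  have hint := intervalIntegral.hasSum_integral_of_dominated_convergence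
    (μ := volume) (a := -π) (b := π)
    (F := fun i θ ↦ cexp (-(α + θ * I)) ^ w i * cexp (N * (α + θ * I)))
    (f := fun θ ↦ F (cexp (-(α + θ * I))) * cexp (N * (α + θ * I)))
    (fun i _ ↦ Real.exp (-α) ^ w i * Real.exp (N * α))
    (fun i ↦ Continuous.aestronglyMeasurable (by fun_prop))
    (fun i ↦ .of_forall fun θ _ ↦ by
      rw [norm_mul, norm_pow, hnorm, Complex.norm_exp]
      simp)
    (.of_forall fun θ _ ↦ hsum.mul_right _)
    intervalIntegrable_const
    (.of_forall fun θ _ ↦ (hF _ (hnorm θ)).mul_right _)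
  simp_rw [integral_exp_pow_mul_exp] at hint
  exact hint.unique
    (hasSum_ite_eq_ncard (finite_setOf_eq_of_summable_pow (Real.exp_pos _) hsum N) _)

end CoefficientFormula

section SaddlePoint

open Complex Filter Topology
open scoped Real

/-- The vertical line `re τ = β ^ 2`, parametrised by `u` at the scale `im τ = β ^ 3 * u` at which
the integrand of Cauchy's formula becomes Gaussian as `β → 0`. -/
noncomputable def saddlePath (β u : ℝ) : ℂ := β ^ 2 * (1 + β * u * I)

/-- The contribution of one coordinate to the Cauchy integrand `distinctProd (exp (-τ)) ^ s *
exp (N * τ)` at `τ = saddlePath β u`, divided by its exponential size `exp (π ^ 2 / (6 * β ^ 2))`,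
when `β` is at the saddle point `N * β ^ 4 = s * π ^ 2 / 12`. -/
noncomputable def saddleIntegrand (β u : ℝ) : ℂ :=
  distinctProd (cexp (-saddlePath β u)) * cexp (π ^ 2 / 12 * ((-1 + β * u * I) / β ^ 2))

lemma saddlePath_eq (β u : ℝ) : saddlePath β u = (β ^ 2 : ℝ) + (β ^ 3 * u : ℝ) * I := by
  rw [saddlePath]
  push_cast
  ring

lemma saddlePath_re (β u : ℝ) : (saddlePath β u).re = β ^ 2 := by
  simp [saddlePath_eq, -ofReal_pow]

lemma saddlePath_zero_right (β : ℝ) : saddlePath β 0 = (β ^ 2 : ℝ) := by simp [saddlePath]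

lemma norm_exp_neg_saddlePath (β u : ℝ) : ‖cexp (-saddlePath β u)‖ = Real.exp (-β ^ 2) := by
  rw [Complex.norm_exp, neg_re, saddlePath_re]

lemma norm_exp_neg_saddlePath_lt_one {β : ℝ} (hβ : β ≠ 0) (u : ℝ) :
    ‖cexp (-saddlePath β u)‖ < 1 := by
  rw [norm_exp_neg_saddlePath, Real.exp_lt_one_iff, neg_lt_zero]
  positivity

lemma one_add_mul_I_ne_zero (x : ℝ) : 1 + x * I ≠ 0 := fun h ↦ by
  simpa using congrArg re h

lemma saddleIntegrand_mul_distinctProd {β : ℝ} (hβ : β ≠ 0) (u : ℝ) :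
    √2 * (saddleIntegrand β u * distinctProd (cexp (-(2 * π ^ 2 / saddlePath β u)))) =
      cexp (saddlePath β u / 24 - π ^ 2 / 12 * (u ^ 2 / (1 + β * u * I))) := by
  have hβ' : (β : ℂ) ≠ 0 := ofReal_ne_zero.2 hβ
  have hw : (1 + β * u * I : ℂ) ≠ 0 := mod_cast one_add_mul_I_ne_zero (β * u)
  have hexp : saddlePath β u / 24 - π ^ 2 / 12 * (u ^ 2 / (1 + β * u * I)) =
      saddlePath β u / 24 + π ^ 2 / (12 * saddlePath β u) +
        π ^ 2 / 12 * ((-1 + β * u * I) / β ^ 2) := by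
    rw [saddlePath]
    field_simp
    linear_combination -24 * π ^ 2 * β ^ 2 * u ^ 2 * I_sq
  rw [hexp, Complex.exp_add, ← distinctProd_mul_inversion, saddleIntegrand]
  · ring
  · rw [saddlePath_re]
    positivity

lemma re_div_saddlePath (x β u : ℝ) :
    (x / saddlePath β u).re = x * ((β ^ 2)⁻¹ * (1 + (β * u) ^ 2)⁻¹) := by
  have hw : (1 + (β * u : ℝ) * I)⁻¹.re = (1 + (β * u) ^ 2)⁻¹ := by
    simp [inv_re, normSq_apply, pow_two]
  rw [← hw, ← mul_assoc, ← re_ofReal_mul, saddlePath]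
  push_cast
  simp only [div_eq_mul_inv, mul_inv, mul_assoc]

lemma tendsto_distinctProd_exp_neg_div_saddlePath (u : ℝ) :
    Tendsto (fun β ↦ distinctProd (cexp (-(2 * π ^ 2 / saddlePath β u)))) (𝓝[>] 0) (𝓝 1) := by
  have hinv : Tendsto (fun β : ℝ ↦ (β ^ 2)⁻¹) (𝓝[>] 0) atTop := by
    simp_rw [← inv_pow]
    exact (tendsto_pow_atTop two_ne_zero).comp tendsto_inv_nhdsGT_zero
  have hw : Tendsto (fun β : ℝ ↦ (1 + (β * u) ^ 2)⁻¹) (𝓝[>] 0) (𝓝 1) := by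
    have hcont : Continuous fun β : ℝ ↦ (1 + (β * u) ^ 2)⁻¹ :=
      Continuous.inv₀ (by fun_prop) fun β ↦ by positivity
    exact (hcont.tendsto' 0 1 (by simp)).mono_left nhdsWithin_le_nhds
  have hre : Tendsto (fun β ↦ (-(2 * π ^ 2 / saddlePath β u)).re) (𝓝[>] 0) atBot := by
    have h (β : ℝ) : (-(2 * π ^ 2 / saddlePath β u)).re =
        -(2 * π ^ 2) * ((β ^ 2)⁻¹ * (1 + (β * u) ^ 2)⁻¹) := by
      rw [neg_re, neg_mul, ← re_div_saddlePath]
      push_cast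
      rfl
    simp_rw [h]
    exact (hinv.atTop_mul_pos one_pos hw).const_mul_atTop_of_neg
      (neg_lt_zero.2 (by positivity))
  have hexp : Tendsto (fun β ↦ cexp (-(2 * π ^ 2 / saddlePath β u))) (𝓝[>] 0) (𝓝 0) :=
    tendsto_exp_comap_re_atBot.comp (tendsto_comap_iff.2 hre)
  have hcont := (continuousAt_distinctProd (q := 0) (by simp)).tendsto
  rw [distinctProd_zero] at hcont
  exact hcont.comp hexp

lemma tendsto_saddleIntegrand (u : ℝ) :
    Tendsto (fun β ↦ saddleIntegrand β u) (𝓝[>] 0)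
      (𝓝 ((√2)⁻¹ * Real.exp (-(π ^ 2 / 12) * u ^ 2) : ℝ)) := by
  have hG := tendsto_distinctProd_exp_neg_div_saddlePath u
  have hnum : Tendsto (fun β : ℝ ↦ cexp (saddlePath β u / 24 - π ^ 2 / 12 *
      (u ^ 2 / (1 + β * u * I)))) (𝓝[>] 0) (𝓝 (cexp (-(π ^ 2 / 12) * u ^ 2))) := by
    have hcont : Continuous fun β : ℝ ↦
        cexp (saddlePath β u / 24 - π ^ 2 / 12 * (u ^ 2 / (1 + β * u * I))) := by
      unfold saddlePath
      refine Continuous.cexp (.sub (by fun_prop) (continuous_const.mul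
        (continuous_const.div (by fun_prop) fun β ↦ ?_)))
      exact mod_cast one_add_mul_I_ne_zero (β * u)
    exact (hcont.tendsto' 0 _ (by simp [saddlePath])).mono_left nhdsWithin_le_nhds
  have hquot := hnum.div (hG.const_mul ((√2 : ℝ) : ℂ)) (by simp)
  have hlim : (((√2)⁻¹ * Real.exp (-(π ^ 2 / 12) * u ^ 2) : ℝ) : ℂ) =
      cexp (-(π ^ 2 / 12) * u ^ 2) / (√2 * 1) := by
    push_cast
    field_simp
  rw [hlim]
  refine hquot.congr' ?_
  filter_upwards [self_mem_nhdsWithin, hG.eventually_ne one_ne_zero] with β hβ hGβ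
  have hne : (√2 * distinctProd (cexp (-(2 * π ^ 2 / saddlePath β u))) : ℂ) ≠ 0 :=
    mul_ne_zero (by simp) hGβ
  rw [Pi.div_apply, ← saddleIntegrand_mul_distinctProd (ne_of_gt hβ), mul_left_comm,
    mul_div_cancel_right₀ _ hne]

lemma continuous_saddleIntegrand {β : ℝ} (hβ : β ≠ 0) : Continuous (saddleIntegrand β) := by
  have hq : Continuous fun u ↦ cexp (-saddlePath β u) := by unfold saddlePath; fun_prop
  unfold saddleIntegrand
  refine Continuous.mul (continuous_iff_continuousAt.2 fun u ↦ ?_) (by fun_prop)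
  exact ContinuousAt.comp (f := fun u ↦ cexp (-saddlePath β u))
    (continuousAt_distinctProd (norm_exp_neg_saddlePath_lt_one hβ u)) hq.continuousAt

lemma norm_saddleIntegrand (β u : ℝ) :
    ‖saddleIntegrand β u‖ =
      ‖distinctProd (cexp (-saddlePath β u))‖ * Real.exp (-(π ^ 2 / 12) / β ^ 2) := by
  have harg : π ^ 2 / 12 * ((-1 + β * u * I) / β ^ 2) =
      -((π ^ 2 / 12 / β ^ 2 : ℝ) + (-(π ^ 2 / 12 * (β * u) / β ^ 2) : ℝ) * I) := by
    push_cast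
    ring
  rw [saddleIntegrand, norm_mul, harg, norm_exp_neg_add_mul_I, neg_div]

lemma norm_saddleIntegrand_le {β u : ℝ} (hβ₀ : β ≠ 0) (hβ : β ^ 2 ≤ 1 / 2)
    (hβu : |β ^ 3 * u| ≤ π) :
    ‖saddleIntegrand β u‖ ≤
      ‖saddleIntegrand β 0‖ * Real.exp (-(u ^ 2 / (π ^ 2 + 2 * β ^ 2 * u ^ 2)) / 4) := by
  have hq := norm_exp_neg_saddlePath_lt_one hβ₀ u
  have hq₀ : (‖cexp (-saddlePath β u)‖ : ℂ) = cexp (-saddlePath β 0) := by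
    rw [norm_exp_neg_saddlePath, saddlePath_zero_right]
    push_cast
    rfl
  have hdefect : u ^ 2 / (π ^ 2 + 2 * β ^ 2 * u ^ 2) ≤
      (1 - ‖cexp (-saddlePath β u)‖)⁻¹ - (1 - cexp (-saddlePath β u))⁻¹.re := by
    have hα : 1 - ‖cexp (-saddlePath β u)‖ ≤ β ^ 2 := by
      rw [norm_exp_neg_saddlePath]
      linarith [Real.add_one_le_exp (-β ^ 2)]
    have hθ := sq_div_pi_sq_le_norm_sub_re hβ hβu
    rw [← saddlePath_eq] at hθ
    have h := div_le_inv_one_sub_norm_sub_re hq hα (by positivity) hθ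
    convert h using 1
    field_simp
  rw [norm_saddleIntegrand, norm_saddleIntegrand, mul_right_comm, ← hq₀]
  gcongr
  refine (norm_distinctProd_le hq).trans ?_
  gcongr

lemma norm_saddleIntegrand_pow_le {s : ℕ} (hs : s ≠ 0) {β u : ℝ} (hβ₀ : β ≠ 0)
    (hβ : β ^ 2 ≤ 1 / 2) (hβu : |β ^ 3 * u| ≤ π) :
    ‖saddleIntegrand β u ^ s‖ ≤
      ‖saddleIntegrand β 0 ^ s‖ * (25000 * π ^ 2 * (1 + u ^ 2)⁻¹) := by
  rw [norm_pow, norm_pow]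
  calc ‖saddleIntegrand β u‖ ^ s
      ≤ (‖saddleIntegrand β 0‖ * Real.exp (-(u ^ 2 / (π ^ 2 + 2 * β ^ 2 * u ^ 2)) / 4)) ^ s := by
        gcongr
        exact norm_saddleIntegrand_le hβ₀ hβ hβu
    _ ≤ ‖saddleIntegrand β 0‖ ^ s * Real.exp (-(u ^ 2 / (π ^ 2 + 2 * β ^ 2 * u ^ 2)) / 4) := by
        rw [mul_pow]
        gcongr
        refine pow_le_of_le_one (Real.exp_pos _).le (Real.exp_le_one_iff.2 ?_) hs
        rw [neg_div, neg_nonpos]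
        positivity
    _ ≤ ‖saddleIntegrand β 0‖ ^ s * (25000 * π ^ 2 * (1 + u ^ 2)⁻¹) := by
        gcongr
        exact exp_neg_div_four_le hβu

lemma tendsto_intervalIntegral_of_dominated {ι E : Type*} [NormedAddCommGroup E] [NormedSpace ℝ E]
    {l : Filter ι} [l.IsCountablyGenerated] {F : ι → ℝ → E} {f : ℝ → E} {R : ι → ℝ} {bound : ℝ → ℝ}
    (hR : Tendsto R l atTop) (hF : ∀ᶠ i in l, AEStronglyMeasurable (F i))
    (hbound : ∀ᶠ i in l, ∀ u, |u| ≤ R i → ‖F i u‖ ≤ bound u) (hint : Integrable bound)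
    (hlim : ∀ u, Tendsto (F · u) l (𝓝 (f u))) :
    Tendsto (fun i ↦ ∫ u in -R i..R i, F i u) l (𝓝 (∫ u, f u)) := by
  have hindicator : Tendsto (fun i ↦ ∫ u, (Set.Ioc (-R i) (R i)).indicator (F i) u) l
      (𝓝 (∫ u, f u)) := by
    refine tendsto_integral_filter_of_dominated_convergence (fun u ↦ ‖bound u‖)
      (hF.mono fun i hi ↦ hi.indicator measurableSet_Ioc) ?_ hint.norm (.of_forall fun u ↦ ?_)
    · filter_upwards [hbound] with i hi
      refine .of_forall fun u ↦ ?_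
      by_cases hu : u ∈ Set.Ioc (-R i) (R i)
      · rw [Set.indicator_of_mem hu]
        exact (hi u (abs_le.2 ⟨hu.1.le, hu.2⟩)).trans (le_abs_self _)
      · rw [Set.indicator_of_notMem hu, norm_zero]
        exact norm_nonneg _
    · refine (hlim u).congr' ?_
      filter_upwards [hR.eventually_gt_atTop |u|] with i hi
      have hu : u ∈ Set.Ioc (-R i) (R i) := ⟨(abs_lt.1 hi).1, (abs_lt.1 hi).2.le⟩
      rw [Set.indicator_of_mem hu]
  refine hindicator.congr' ?_
  filter_upwards [hR.eventually_ge_atTop 0] with i hi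
  rw [integral_indicator measurableSet_Ioc, intervalIntegral.integral_of_le (by linarith)]

lemma integral_inv_sqrt_two_mul_exp_pow (s : ℕ) :
    ∫ u : ℝ, (((√2)⁻¹ * Real.exp (-(π ^ 2 / 12) * u ^ 2) : ℝ) : ℂ) ^ s =
      ((√2)⁻¹ ^ s * √(12 / (π * s)) : ℝ) := by
  have hpow (u : ℝ) : (((√2)⁻¹ * Real.exp (-(π ^ 2 / 12) * u ^ 2) : ℝ) : ℂ) ^ s =
      ((√2)⁻¹ ^ s * Real.exp (-(s * π ^ 2 / 12) * u ^ 2) : ℝ) := by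
    rw [← ofReal_pow, mul_pow, ← Real.exp_nat_mul]
    ring_nf
  have hvar : π / (s * π ^ 2 / 12) = 12 / (π * s) := by
    field_simp
  simp_rw [hpow]
  rw [integral_complex_ofReal, integral_const_mul, integral_gaussian, hvar]

lemma tendsto_pi_div_pow_three : Tendsto (fun β : ℝ ↦ π / β ^ 3) (𝓝[>] 0) atTop := by
  simp_rw [div_eq_mul_inv, ← inv_pow]
  exact ((tendsto_pow_atTop three_ne_zero).comp tendsto_inv_nhdsGT_zero).const_mul_atTop
    Real.pi_pos

lemma tendsto_integral_saddleIntegrand_pow {s : ℕ} (hs : s ≠ 0) :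
    Tendsto (fun β : ℝ ↦ ∫ u in -(π / β ^ 3)..π / β ^ 3, saddleIntegrand β u ^ s) (𝓝[>] 0)
      (𝓝 ((√2)⁻¹ ^ s * √(12 / (π * s)) : ℝ)) := by
  have hpos : ∀ᶠ β : ℝ in 𝓝[>] 0, 0 < β := self_mem_nhdsWithin
  have hsmall : ∀ᶠ β : ℝ in 𝓝[>] 0, β ^ 2 < 1 / 2 :=
    nhdsWithin_le_nhds (((continuous_pow 2).tendsto' (0 : ℝ) 0 (by simp)).eventually
      (gt_mem_nhds (by norm_num)))
  obtain ⟨B, hB⟩ := ((tendsto_saddleIntegrand 0).pow s).norm.isBoundedUnder_le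
  rw [← integral_inv_sqrt_two_mul_exp_pow]
  refine tendsto_intervalIntegral_of_dominated
    (bound := fun u ↦ B * (25000 * π ^ 2 * (1 + u ^ 2)⁻¹)) tendsto_pi_div_pow_three ?_ ?_
    ((integrable_inv_one_add_sq.const_mul _).const_mul _) fun u ↦ (tendsto_saddleIntegrand u).pow s
  · filter_upwards [hpos] with β hβ
    exact ((continuous_saddleIntegrand hβ.ne').pow s).aestronglyMeasurable
  · filter_upwards [hpos, hsmall, eventually_map.1 hB] with β hβ hβ_sq hβB u hu
    have hβu : |β ^ 3 * u| ≤ π := by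
      rwa [abs_mul, abs_of_pos (pow_pos hβ 3), ← le_div_iff₀' (pow_pos hβ 3)]
    refine (norm_saddleIntegrand_pow_le hs hβ.ne' hβ_sq.le hβu).trans ?_
    gcongr

end SaddlePoint

section Asymptotics

open Complex Filter Topology Asymptotics
open scoped Real

lemma distinctProd_pow_mul_exp_saddlePath {s N : ℕ} {β : ℝ} (hβ : β ≠ 0)
    (hN : N * β ^ 4 = s * π ^ 2 / 12) (u : ℝ) :
    distinctProd (cexp (-saddlePath β u)) ^ s * cexp (N * saddlePath β u) =
      Real.exp (s * π ^ 2 / (6 * β ^ 2)) * saddleIntegrand β u ^ s := by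
  have hβ' : (β : ℂ) ≠ 0 := ofReal_ne_zero.2 hβ
  have hN' : (N * β ^ 4 : ℂ) = s * π ^ 2 / 12 := mod_cast congrArg ((↑) : ℝ → ℂ) hN
  have hexp : N * saddlePath β u =
      s * π ^ 2 / (6 * β ^ 2) + s * (π ^ 2 / 12 * ((-1 + β * u * I) / β ^ 2)) := by
    rw [saddlePath]
    field_simp
    linear_combination 72 * (1 + β * u * I) * hN'
  rw [saddleIntegrand, mul_pow, ← Complex.exp_nat_mul, hexp, Complex.exp_add]
  push_cast
  ring

lemma integral_saddleIntegrand_pow_eq {s N : ℕ} {β : ℝ} (hβ : 0 < β)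
    (hN : N * β ^ 4 = s * π ^ 2 / 12) :
    ∫ u in -(π / β ^ 3)..π / β ^ 3, saddleIntegrand β u ^ s =
      ({k : Fin s → ℕ | norm1Vec k = N}.ncard * (2 * π) /
        (β ^ 3 * Real.exp (s * π ^ 2 / (6 * β ^ 2))) : ℝ) := by
  have hcauchy := integral_generatingFunction_mul_exp (α := β ^ 2) (fun q hq ↦
    hasSum_pow_norm1Vec (hq ▸ Real.exp_lt_one_iff.2 (neg_lt_zero.2 (by positivity))) s) N
  have hscale := intervalIntegral.smul_integral_comp_mul_left (a := -(π / β ^ 3)) (b := π / β ^ 3)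
    (fun θ : ℝ ↦ distinctProd (cexp (-((β ^ 2 : ℝ) + θ * I))) ^ s *
      cexp (N * ((β ^ 2 : ℝ) + θ * I))) (β ^ 3)
  have hβ₃ : β ^ 3 * (π / β ^ 3) = π := by field_simp
  rw [mul_neg, hβ₃, hcauchy] at hscale
  simp_rw [← saddlePath_eq, distinctProd_pow_mul_exp_saddlePath hβ.ne' hN] at hscale
  rw [intervalIntegral.integral_const_mul, real_smul, ← mul_assoc] at hscale
  push_cast at hscale ⊢
  rw [eq_div_iff (by simp [hβ.ne', Complex.exp_ne_zero]), ← hscale, mul_comm]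

/-- The `β` at which `N * τ + s * π ^ 2 / (12 * τ)`, the main part of the logarithm of the Cauchy
integrand, has its critical point at `τ = β ^ 2`. -/
noncomputable def saddleScale (s N : ℕ) : ℝ := (s * π ^ 2 / (12 * N)) ^ (1 / 4 : ℝ)

lemma saddleScale_pos {s N : ℕ} (hs : s ≠ 0) (hN : N ≠ 0) : 0 < saddleScale s N := by
  unfold saddleScale
  positivity

lemma saddleScale_pow_four (s N : ℕ) : saddleScale s N ^ 4 = s * π ^ 2 / (12 * N) := by
  rw [saddleScale, ← Real.rpow_mul_natCast (by positivity)]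
  norm_num

lemma tendsto_saddleScale {s : ℕ} (hs : s ≠ 0) :
    Tendsto (saddleScale s) atTop (𝓝[>] 0) := by
  refine tendsto_nhdsWithin_iff.2 ⟨?_, ?_⟩
  · have h : Tendsto (fun N : ℕ ↦ s * π ^ 2 / (12 * N : ℝ)) atTop (𝓝 0) := by
      simpa only [← div_div] using tendsto_const_div_atTop_nhds_zero_nat (s * π ^ 2 / 12)
    have hroot := h.rpow_const (p := (1 / 4 : ℝ)) (.inr (by norm_num))
    rwa [Real.zero_rpow (by norm_num)] at hroot
  · filter_upwards [eventually_ne_atTop 0] with N hN using saddleScale_pos hs hN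

lemma div_saddleScale_sq {s N : ℕ} (hs : s ≠ 0) (hN : N ≠ 0) :
    s * π ^ 2 / (6 * saddleScale s N ^ 2) = π * √(s * N / 3) := by
  have hβ : (saddleScale s N ^ 2) ^ 2 = s * π ^ 2 / (12 * N) := by
    rw [← pow_mul, saddleScale_pow_four]
  refine (sq_eq_sq₀ (by positivity) (by positivity)).1 ?_
  rw [div_pow, mul_pow 6, hβ, mul_pow π, Real.sq_sqrt (by positivity)]
  field_simp
  norm_num

lemma saddleScale_pow_three_mul_sqrt {s : ℕ} (hs : s ≠ 0) (N : ℕ) :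
    saddleScale s N ^ 3 * √(12 / (π * s)) =
      π * ((s / 12 : ℝ) ^ (1 / 4 : ℝ) / (N : ℝ) ^ (3 / 4 : ℝ)) := by
  have hβ : saddleScale s N = (s / 12 : ℝ) ^ (1 / 4 : ℝ) * √π / (N : ℝ) ^ (1 / 4 : ℝ) := by
    rw [saddleScale, show s * π ^ 2 / (12 * N : ℝ) = s / 12 * π ^ 2 / N by ring,
      Real.div_rpow (by positivity) (by positivity), Real.mul_rpow (by positivity) (by positivity),
      ← Real.rpow_natCast_mul Real.pi_pos.le, Real.sqrt_eq_rpow]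
    norm_num
  have hpow : ((N : ℝ) ^ (1 / 4 : ℝ)) ^ 3 = (N : ℝ) ^ (3 / 4 : ℝ) := by
    rw [← Real.rpow_mul_natCast (by positivity)]
    norm_num
  have hsqrt : √(12 / (π * s)) = (√π * ((s / 12 : ℝ) ^ (1 / 4 : ℝ)) ^ 2)⁻¹ := by
    rw [← Real.rpow_mul_natCast (by positivity), show (1 / 4 * (2 : ℕ) : ℝ) = 1 / 2 by norm_num,
      ← Real.sqrt_eq_rpow, ← Real.sqrt_mul Real.pi_pos.le, ← Real.sqrt_inv]
    congr 1
    field_simp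
  have hpi : √π ^ 2 = π := Real.sq_sqrt Real.pi_pos.le
  rw [hβ, hsqrt, div_pow, mul_pow, hpow, pow_succ √π, hpi]
  field_simp

theorem ncard_norm1Vec_isEquivalent {s : ℕ} (hs : s ≠ 0) :
    (fun N ↦ ({k : Fin s → ℕ | norm1Vec k = N}.ncard : ℝ)) ~[atTop] fun N ↦
      (s / 12) ^ (1 / 4 : ℝ) / (2 * √2 ^ s) / (N : ℝ) ^ (3 / 4 : ℝ) *
        Real.exp (π * √(s * N / 3)) := by
  have hpos : ∀ᶠ N : ℕ in atTop, N ≠ 0 := eventually_ne_atTop 0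
  set L : ℝ := (√2)⁻¹ ^ s * √(12 / (π * s)) with hL
  have hL₀ : L ≠ 0 := by positivity
  have hcoeff : Tendsto (fun N : ℕ ↦ {k : Fin s → ℕ | norm1Vec k = N}.ncard * (2 * π) /
      (saddleScale s N ^ 3 * Real.exp (s * π ^ 2 / (6 * saddleScale s N ^ 2)))) atTop (𝓝 L) := by
    refine tendsto_ofReal_iff.1 (((tendsto_integral_saddleIntegrand_pow hs).comp
      (tendsto_saddleScale hs)).congr' ?_)
    filter_upwards [hpos] with N hN
    refine integral_saddleIntegrand_pow_eq (saddleScale_pos hs hN) ?_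
    rw [saddleScale_pow_four]
    field_simp
  have hratio := hcoeff.div_const L
  rw [div_self hL₀] at hratio
  refine isEquivalent_of_tendsto_one (hratio.congr' ?_)
  filter_upwards [hpos] with N hN
  have hscale : saddleScale s N ^ 3 * L =
      (√2)⁻¹ ^ s * (π * ((s / 12 : ℝ) ^ (1 / 4 : ℝ) / (N : ℝ) ^ (3 / 4 : ℝ))) := by
    rw [hL, mul_left_comm, saddleScale_pow_three_mul_sqrt hs]
  rw [div_saddleScale_sq hs hN, div_div, mul_right_comm, hscale, inv_pow, Pi.div_apply]
  field_simp

lemma setOf_ne_zero_and_norm1Vec_eq (s : ℕ) {N : ℕ} (hN : N ≠ 0) :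
    {k : Fin s → ℕ | k ≠ 0 ∧ norm1Vec k = N} = {k | norm1Vec k = N} := by
  have hzero : norm1Vec (0 : Fin s → ℕ) = 0 := by simp [norm1Vec, norm1, bitFinset]
  ext k
  refine and_iff_right_of_imp ?_
  rintro hk rfl
  exact hN (hk.symm.trans hzero)

end Asymptotics

/-- asymptotics of the number of `𝐤 ∈ ℕ₀^s ∖ {0}` with `‖𝛋‖₁ = N`:
it is `∼ (C/N^{3/4})·exp(π√(sN/3))` for some constant `C > 0` depending on `s`. -/
theorem count_eq_asymptotic (s : ℕ) (hs : 1 ≤ s) :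
    ∃ C : ℝ, 0 < C ∧
      Filter.Tendsto
        (fun N : ℕ => ({k : Fin s → ℕ | k ≠ 0 ∧ norm1Vec k = N}.ncard : ℝ) /
          (C / (N : ℝ) ^ ((3 : ℝ)/4) * Real.exp (Real.pi * Real.sqrt (s * N / 3))))
        Filter.atTop (nhds 1) := by
  have hs₀ : s ≠ 0 := Nat.one_le_iff_ne_zero.1 hs
  refine ⟨(s / 12) ^ (1 / 4 : ℝ) / (2 * √2 ^ s), by positivity, ?_⟩
  have hpos : ∀ᶠ N : ℕ in Filter.atTop, N ≠ 0 := Filter.eventually_ne_atTop 0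
  have hratio := (Asymptotics.isEquivalent_iff_tendsto_one (hpos.mono fun N hN ↦ ?_)).1
    (ncard_norm1Vec_isEquivalent hs₀)
  · refine hratio.congr' (hpos.mono fun N hN ↦ ?_)
    simp only [Pi.div_apply, setOf_ne_zero_and_norm1Vec_eq s hN]
  · positivity

end MedianQMC
end

section
/- For all integers N ≥ 1 and s ≥ 1, |{𝐤 ∈ ℕ₀^s ∖ {0} : ‖𝛋‖₁ = N}| < (π√s / (2√(3N))) · exp(π√(sN/3)). -/
open MeasureTheory ProbabilityTheory
open scoped ENNReal

namespace MedianQMC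

/-!
Raising the top digit of one coordinate is an injective map on `ℕ₀^s` that increases `‖𝛋‖₁` by
exactly one, so every `𝐤` with `‖𝛋‖₁ = N` contributes a full geometric series
`x ^ N + x ^ (N + 1) + ⋯` to the generating function
`∑_𝐤 x ^ ‖𝛋‖₁ = (∏_{ℓ ≥ 1} (1 + x ^ ℓ)) ^ s`.
Hence the count is at most `(1 - x) x ^ (-N)` times that `s`-th power.

For `x = exp (-t)`, expanding `log (1 + y) = log (1 - y ^ 2) - log (1 - y)` at `y = x ^ ℓ` and
summing over `ℓ` first bounds the logarithm of the product by
`∑_{m ≥ 1} 1 / (2 m sinh (m t)) ≤ ∑_{m ≥ 1} 1 / (2 m ^ 2 t) = π ^ 2 / (12 t)`. The choice of `t`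
minimizing `N t + s π ^ 2 / (12 t)`, together with `1 - exp (-t) < t`, gives the claim.
-/

section Digits

open Finset

theorem mem_bitFinset {k i : ℕ} : i ∈ bitFinset k ↔ k.testBit i := by
  have lt_of_testBit (h : k.testBit i) : i < k + 1 :=
    (Nat.lt_two_pow_self.trans_le (Nat.ge_two_pow_of_testBit h)).trans k.lt_succ_self
  simpa [bitFinset] using lt_of_testBit

theorem lt_of_mem_bitFinset {k i L : ℕ} (hk : k < 2 ^ L) (hi : i ∈ bitFinset k) : i < L :=
  (Nat.pow_lt_pow_iff_right one_lt_two).1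
    ((Nat.ge_two_pow_of_testBit (mem_bitFinset.1 hi)).trans_lt hk)

theorem bitFinset_two_pow_add {L r : ℕ} (hr : r < 2 ^ L) :
    bitFinset (2 ^ L + r) = insert L (bitFinset r) := by
  ext i
  simp only [mem_insert, mem_bitFinset]
  rcases lt_trichotomy i L with hi | rfl | hi
  · simp [Nat.testBit_two_pow_add_gt hi, hi.ne]
  · simp [Nat.testBit_two_pow_add_eq, Nat.testBit_lt_two_pow hr]
  · have h_pow : 2 ^ L + 2 ^ L ≤ 2 ^ i := by
      rw [← mul_two, ← pow_succ]
      exact Nat.pow_le_pow_right two_pos hi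
    simp [Nat.testBit_lt_two_pow (show 2 ^ L + r < 2 ^ i by omega),
      Nat.testBit_lt_two_pow (show r < 2 ^ i by omega), hi.ne']

theorem norm1_two_pow_add {L r : ℕ} (hr : r < 2 ^ L) :
    norm1 (2 ^ L + r) = norm1 r + (L + 1) := by
  have hL : L ∉ bitFinset r := fun h => (lt_of_mem_bitFinset hr h).false
  rw [norm1, bitFinset_two_pow_add hr, sum_insert hL, add_comm, norm1]

theorem lt_two_pow_norm1 (k : ℕ) : k < 2 ^ norm1 k := by
  refine Nat.lt_pow_two_of_testBit k fun i hi => ?_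
  by_contra h
  have h_mem : i ∈ bitFinset k := mem_bitFinset.2 (by simpa using h)
  have h_le : i + 1 ≤ norm1 k := single_le_sum (f := (· + 1)) (fun _ _ => Nat.zero_le _) h_mem
  omega

theorem finite_setOf_norm1Vec_eq (s N : ℕ) : {k : Fin s → ℕ | norm1Vec k = N}.Finite := by
  refine (Set.finite_Iic fun _ : Fin s => 2 ^ N).subset fun k hk j => ?_
  have h_le : norm1 (k j) ≤ N :=
    hk ▸ single_le_sum (f := fun j => norm1 (k j)) (fun _ _ => Nat.zero_le _) (mem_univ j)
  exact (lt_two_pow_norm1 _).le.trans (Nat.pow_le_pow_right two_pos h_le)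

/-- `k` with its most significant binary digit moved up by one position. Since `Nat.log 2 0 = 0`,
`raiseTop 0 = 1`, so that raising also adds one to `‖κ‖₁` at `k = 0`. -/
def raiseTop (k : ℕ) : ℕ := k + 2 ^ Nat.log 2 k

theorem raiseTop_strictMono : StrictMono raiseTop :=
  strictMono_id.add_monotone fun _ _ h => Nat.pow_le_pow_right two_pos (Nat.log_mono_right h)

theorem norm1_raiseTop (k : ℕ) : norm1 (raiseTop k) = norm1 k + 1 := by
  rcases eq_or_ne k 0 with rfl | hk
  · rfl
  obtain ⟨r, hr⟩ := Nat.exists_eq_add_of_le (Nat.pow_log_le_self 2 hk)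
  have h_lt : r < 2 ^ Nat.log 2 k := by
    have := Nat.lt_pow_succ_log_self one_lt_two k
    rw [pow_succ] at this
    omega
  have h_raise : raiseTop k = 2 ^ (Nat.log 2 k + 1) + r := by
    rw [raiseTop, pow_succ]
    omega
  calc norm1 (raiseTop k) = norm1 r + (Nat.log 2 k + 1) + 1 := by
        rw [h_raise, norm1_two_pow_add (h_lt.trans (Nat.pow_lt_pow_succ one_lt_two))]
        ring
    _ = norm1 (2 ^ Nat.log 2 k + r) + 1 := by rw [norm1_two_pow_add h_lt]
    _ = norm1 k + 1 := by rw [← hr]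

/-- `𝐤` with the most significant binary digit of its `j`-th coordinate moved up by one position:
the injection of `ℕ₀^s` into itself that raises `‖𝛋‖₁` by one. -/
def raiseTopAt {ι : Type*} [DecidableEq ι] (j : ι) (k : ι → ℕ) : ι → ℕ :=
  Function.update k j (raiseTop (k j))

theorem raiseTopAt_injective {ι : Type*} [DecidableEq ι] (j : ι) :
    Function.Injective (raiseTopAt j) := by
  intro k l h
  ext i
  have hi := congrFun h i
  rcases eq_or_ne i j with rfl | hij
  · exact raiseTop_strictMono.injective (by simpa [raiseTopAt] using hi)
  · simpa [raiseTopAt, hij] using hi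

theorem norm1Vec_raiseTopAt {s : ℕ} (j : Fin s) (k : Fin s → ℕ) :
    norm1Vec (raiseTopAt j k) = norm1Vec k + 1 := by
  have h_other : ∀ i ∈ univ.erase j, norm1 (raiseTopAt j k i) = norm1 (k i) := fun i hi => by
    rw [raiseTopAt, Function.update_of_ne (ne_of_mem_erase hi)]
  rw [norm1Vec, norm1Vec, ← add_sum_erase _ _ (mem_univ j), ← add_sum_erase _ _ (mem_univ j),
    sum_congr rfl h_other, raiseTopAt, Function.update_self, norm1_raiseTop, add_right_comm]

end Digits

section GeneratingFunction

open Finset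

theorem sum_range_two_pow_pow_norm1 {R : Type*} [CommSemiring R] (x : R) (L : ℕ) :
    ∑ k ∈ range (2 ^ L), x ^ norm1 k = ∏ l ∈ range L, (1 + x ^ (l + 1)) := by
  induction L with
  | zero => simp [norm1, bitFinset]
  | succ L ih =>
    have h_top : ∑ r ∈ range (2 ^ L), x ^ norm1 (2 ^ L + r) =
        (∑ r ∈ range (2 ^ L), x ^ norm1 r) * x ^ (L + 1) := by
      rw [sum_mul]
      exact sum_congr rfl fun r hr => by rw [norm1_two_pow_add (mem_range.1 hr), pow_add]
    rw [pow_succ, mul_two, sum_range_add, h_top, ih, prod_range_succ, mul_add, mul_one]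

theorem sum_piFinset_pow_norm1Vec {R : Type*} [CommSemiring R] (x : R) (s L : ℕ) :
    ∑ k ∈ Fintype.piFinset fun _ : Fin s => range (2 ^ L), x ^ norm1Vec k =
      (∏ l ∈ range L, (1 + x ^ (l + 1))) ^ s := by
  rw [← sum_range_two_pow_pow_norm1, sum_pow']
  simp only [norm1Vec, prod_pow_eq_pow_sum]

theorem exists_subset_piFinset_range_two_pow {ι : Type*} [Fintype ι] [DecidableEq ι]
    (S : Finset (ι → ℕ)) : ∃ L, S ⊆ Fintype.piFinset fun _ : ι => range (2 ^ L) := by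
  refine ⟨S.sup fun k => univ.sup k, fun k hk => ?_⟩
  simp only [Fintype.mem_piFinset, mem_range]
  intro j
  have h_le : k j ≤ S.sup fun k => univ.sup k :=
    (le_sup (mem_univ j)).trans (le_sup (f := fun k : ι → ℕ => univ.sup k) hk)
  exact h_le.trans_lt Nat.lt_two_pow_self

/-- The images of `F` under the iterates of `σ` are disjoint, which makes room for a geometric
series inside the sums bounded by `B`. -/
theorem card_mul_pow_le_of_injective {α : Type*} {f : α → ℕ} {σ : α → α}
    (hσ : Function.Injective σ) (hfσ : ∀ a, f (σ a) = f a + 1) {x B : ℝ} (hx0 : 0 ≤ x) (hx1 : x < 1)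
    (hB : ∀ S : Finset α, ∑ a ∈ S, x ^ f a ≤ B) {F : Finset α} {N : ℕ} (hF : ∀ a ∈ F, f a = N) :
    #F * x ^ N ≤ (1 - x) * B := by
  have f_iterate (i : ℕ) (a : α) : f (σ^[i] a) = f a + i := by
    induction i with
    | zero => rfl
    | succ i ih => rw [Function.iterate_succ_apply', hfσ, ih, add_assoc]
  have injOn_iterate (M : ℕ) :
      Set.InjOn (fun p : ℕ × α => σ^[p.1] p.2) (range M ×ˢ F : Finset (ℕ × α)) := by
    rintro ⟨i, a⟩ ha ⟨j, b⟩ hb (h : σ^[i] a = σ^[j] b)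
    have h_weight := congrArg f h
    rw [f_iterate, f_iterate, hF a (mem_product.1 ha).2, hF b (mem_product.1 hb).2] at h_weight
    obtain rfl : i = j := Nat.add_left_cancel h_weight
    rw [hσ.iterate i h]
  have partial_sum_le (M : ℕ) : #F * x ^ N * ∑ i ∈ range M, x ^ i ≤ B := by
    classical
    calc #F * x ^ N * ∑ i ∈ range M, x ^ i = ∑ i ∈ range M, ∑ a ∈ F, x ^ f (σ^[i] a) := by
          rw [mul_sum]
          refine sum_congr rfl fun i _ => ?_
          rw [sum_congr rfl fun a ha => by rw [f_iterate, hF a ha], sum_const, nsmul_eq_mul,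
            pow_add, mul_assoc]
      _ = ∑ a ∈ (range M ×ˢ F).image fun p => σ^[p.1] p.2, x ^ f a := by
          rw [sum_image (injOn_iterate M), sum_product]
      _ ≤ B := hB _
  have geometric_le : #F * x ^ N * (1 - x)⁻¹ ≤ B :=
    le_of_tendsto' ((hasSum_geometric_of_lt_one hx0 hx1).tendsto_sum_nat.const_mul _) partial_sum_le
  rwa [← div_eq_mul_inv, div_le_iff₀' (sub_pos.2 hx1)] at geometric_le

end GeneratingFunction

section ProductBound

open Finset Real

theorem sum_range_pow_sub_sq_pow_le {y : ℝ} (hy0 : 0 ≤ y) (hy1 : y < 1) (L : ℕ) :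
    ∑ l ∈ range L, (y ^ (l + 1) - (y ^ 2) ^ (l + 1)) ≤ y / (1 - y ^ 2) := by
  have hsq : y ^ 2 < 1 := pow_lt_one₀ hy0 hy1 two_ne_zero
  have h_geom {z : ℝ} (hz0 : 0 ≤ z) (hz1 : z < 1) :
      HasSum (fun l : ℕ => z ^ (l + 1)) (z * (1 - z)⁻¹) := by
    simpa only [pow_succ'] using (hasSum_geometric_of_lt_one hz0 hz1).mul_left z
  have h_nonneg (l : ℕ) : 0 ≤ y ^ (l + 1) - (y ^ 2) ^ (l + 1) :=
    sub_nonneg.2 (pow_le_pow_left₀ (sq_nonneg y) (pow_le_of_le_one hy0 hy1.le two_ne_zero) _)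
  have h_value : y * (1 - y)⁻¹ - y ^ 2 * (1 - y ^ 2)⁻¹ = y / (1 - y ^ 2) := by
    have h1 : 1 - y ≠ 0 := (sub_pos.2 hy1).ne'
    have h2 : 1 - y ^ 2 ≠ 0 := (sub_pos.2 hsq).ne'
    field_simp
    ring
  exact h_value ▸ sum_le_hasSum _ (fun l _ => h_nonneg l)
    ((h_geom hy0 hy1).sub (h_geom (sq_nonneg y) hsq))

theorem exp_neg_div_one_sub_exp_neg_sq_le {u : ℝ} (hu : 0 < u) :
    exp (-u) / (1 - exp (-u) ^ 2) ≤ 1 / (2 * u) := by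
  have h_sinh : exp (-u) / (1 - exp (-u) ^ 2) = 1 / (2 * sinh u) := by
    have h_factor : 1 - exp (-u) ^ 2 = exp (-u) * (2 * sinh u) := by
      have h_inv : exp (-u) * exp u = 1 := by rw [← exp_add, neg_add_cancel, exp_zero]
      rw [sinh_eq]
      linear_combination -h_inv
    rw [h_factor, div_mul_cancel_left₀ (exp_ne_zero _), one_div]
  rw [h_sinh]
  gcongr
  exact self_le_sinh_iff.2 hu.le

theorem hasSum_log_one_add {y : ℝ} (hy : |y| < 1) :
    HasSum (fun m : ℕ => (y ^ (m + 1) - (y ^ 2) ^ (m + 1)) / (m + 1)) (log (1 + y)) := by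
  have hsq : |y ^ 2| < 1 := by
    rw [abs_pow]
    exact pow_lt_one₀ (abs_nonneg y) hy two_ne_zero
  have h_log : log (1 + y) = -log (1 - y) - -log (1 - y ^ 2) := by
    obtain ⟨h_lower, h_upper⟩ := abs_lt.1 hy
    rw [show 1 - y ^ 2 = (1 + y) * (1 - y) by ring, log_mul (by linarith) (by linarith)]
    ring
  simpa only [h_log, sub_div] using
    (hasSum_pow_div_log_of_abs_lt_one hy).sub (hasSum_pow_div_log_of_abs_lt_one hsq)

theorem hasSum_one_div_succ_sq : HasSum (fun m : ℕ => 1 / ((m : ℝ) + 1) ^ 2) (π ^ 2 / 6) := by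
  simpa using (hasSum_nat_add_iff' 1).2 hasSum_zeta_two

theorem sum_range_log_one_add_exp_neg_pow_le {t : ℝ} (ht : 0 < t) (L : ℕ) :
    ∑ l ∈ range L, log (1 + exp (-t) ^ (l + 1)) ≤ π ^ 2 / (12 * t) := by
  have h_lt_one {u : ℝ} (hu : 0 < u) : exp (-u) < 1 := exp_lt_one_iff.2 (neg_lt_zero.2 hu)
  have h_sum : HasSum (fun m : ℕ => ∑ l ∈ range L,
      ((exp (-t) ^ (l + 1)) ^ (m + 1) - ((exp (-t) ^ (l + 1)) ^ 2) ^ (m + 1)) / (m + 1))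
      (∑ l ∈ range L, log (1 + exp (-t) ^ (l + 1))) := by
    refine hasSum_sum fun l _ => hasSum_log_one_add ?_
    rw [abs_of_pos (by positivity)]
    exact pow_lt_one₀ (exp_nonneg _) (h_lt_one ht) l.succ_ne_zero
  have h_term (m : ℕ) : ∑ l ∈ range L,
      ((exp (-t) ^ (l + 1)) ^ (m + 1) - ((exp (-t) ^ (l + 1)) ^ 2) ^ (m + 1)) / (m + 1) ≤
        1 / (2 * t) * (1 / ((m : ℝ) + 1) ^ 2) := by
    have hu : 0 < (m + 1) * t := by positivity
    have h_exp : exp (-t) ^ (m + 1) = exp (-((m + 1) * t)) := by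
      rw [← exp_nat_mul]
      push_cast
      ring_nf
    calc _ = (∑ l ∈ range L, ((exp (-t) ^ (m + 1)) ^ (l + 1) -
            ((exp (-t) ^ (m + 1)) ^ 2) ^ (l + 1))) / (m + 1) := by
          rw [sum_div]
          exact sum_congr rfl fun l _ => by ring
      _ ≤ 1 / (2 * ((m + 1) * t)) / (m + 1) := by
          rw [h_exp]
          gcongr
          exact (sum_range_pow_sub_sq_pow_le (exp_nonneg _) (h_lt_one hu) L).trans
            (exp_neg_div_one_sub_exp_neg_sq_le hu)
      _ = 1 / (2 * t) * (1 / ((m : ℝ) + 1) ^ 2) := by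
          field_simp
  calc _ ≤ 1 / (2 * t) * (π ^ 2 / 6) := hasSum_le h_term h_sum (hasSum_one_div_succ_sq.mul_left _)
    _ = π ^ 2 / (12 * t) := by
      field_simp
      norm_num

theorem prod_range_one_add_exp_neg_pow_le {t : ℝ} (ht : 0 < t) (L : ℕ) :
    ∏ l ∈ range L, (1 + exp (-t) ^ (l + 1)) ≤ exp (π ^ 2 / (12 * t)) := by
  rw [← log_le_iff_le_exp (prod_pos fun _ _ => by positivity), log_prod fun _ _ => by positivity]
  exact sum_range_log_one_add_exp_neg_pow_le ht L

end ProductBound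

section Counting

open Finset Real

theorem sum_exp_neg_pow_norm1Vec_le {t : ℝ} (ht : 0 < t) {s : ℕ} (S : Finset (Fin s → ℕ)) :
    ∑ k ∈ S, exp (-t) ^ norm1Vec k ≤ exp (s * (π ^ 2 / (12 * t))) := by
  obtain ⟨L, hL⟩ := exists_subset_piFinset_range_two_pow S
  calc ∑ k ∈ S, exp (-t) ^ norm1Vec k
      ≤ ∑ k ∈ Fintype.piFinset fun _ : Fin s => range (2 ^ L), exp (-t) ^ norm1Vec k :=
        sum_le_sum_of_subset_of_nonneg hL fun _ _ _ => by positivity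
    _ = (∏ l ∈ range L, (1 + exp (-t) ^ (l + 1))) ^ s := sum_piFinset_pow_norm1Vec _ s L
    _ ≤ exp (π ^ 2 / (12 * t)) ^ s := by
        gcongr
        exact prod_range_one_add_exp_neg_pow_le ht L
    _ = exp (s * (π ^ 2 / (12 * t))) := (exp_nat_mul _ s).symm

theorem ncard_norm1Vec_eq_le {t : ℝ} (ht : 0 < t) {s : ℕ} (hs : 0 < s) (N : ℕ) :
    ({k : Fin s → ℕ | norm1Vec k = N}.ncard : ℝ) ≤
      (1 - exp (-t)) * exp (N * t + s * (π ^ 2 / (12 * t))) := by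
  have hfin := finite_setOf_norm1Vec_eq s N
  have h_card : #hfin.toFinset * exp (-t) ^ N ≤ (1 - exp (-t)) * exp (s * (π ^ 2 / (12 * t))) :=
    card_mul_pow_le_of_injective (raiseTopAt_injective ⟨0, hs⟩) (norm1Vec_raiseTopAt ⟨0, hs⟩)
      (exp_nonneg _) (exp_lt_one_iff.2 (neg_lt_zero.2 ht)) (sum_exp_neg_pow_norm1Vec_le ht)
      fun k hk => hfin.mem_toFinset.1 hk
  have h_pow : exp (-t) ^ N = (exp (N * t))⁻¹ := by rw [← exp_nat_mul, ← exp_neg, mul_neg]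
  rw [h_pow, ← div_eq_mul_inv, div_le_iff₀ (exp_pos _)] at h_card
  rwa [Set.ncard_eq_toFinset_card _ hfin, add_comm, exp_add, ← mul_assoc]

theorem mul_add_mul_pi_sq_div_eq {a b t : ℝ} (ha : 0 < a) (hb : 0 < b)
    (ht : t = π * √b / (2 * √(3 * a))) :
    a * t + b * (π ^ 2 / (12 * t)) = π * √(b * a / 3) := by
  have hb_sq : √b ^ 2 = b := sq_sqrt hb.le
  have ha_sq : √(3 * a) ^ 2 = 3 * a := sq_sqrt (by positivity)
  have h_sqrt : √(b * a / 3) = √b * √(3 * a) / 3 := by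
    rw [← sqrt_mul hb.le, eq_div_iff three_ne_zero, ← sqrt_sq (zero_le_three (α := ℝ)),
      ← sqrt_mul (by positivity)]
    congr 1
    rw [sqrt_sq zero_le_three]
    ring
  rw [h_sqrt, ht]
  have hp : 0 < √b := sqrt_pos.2 hb
  have hq : 0 < √(3 * a) := sqrt_pos.2 (by positivity)
  generalize √b = p at *
  generalize √(3 * a) = q at *
  have h_left : a * (π * p / (2 * q)) = π * (p * q / 3) / 2 := by
    field_simp
    linear_combination -ha_sq
  have h_right : b * (π ^ 2 / (12 * (π * p / (2 * q)))) = π * (p * q / 3) / 2 := by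
    field_simp
    linear_combination -12 * hb_sq
  rw [h_left, h_right, add_halves]

end Counting

/-- finite-`N` bound on the number of `𝐤 ∈ ℕ₀^s ∖ {0}` with `‖𝛋‖₁ = N`. -/
theorem count_eq_lt (N s : ℕ) (hN : 1 ≤ N) (hs : 1 ≤ s) :
    ({k : Fin s → ℕ | k ≠ 0 ∧ norm1Vec k = N}.ncard : ℝ) <
      Real.pi * Real.sqrt s / (2 * Real.sqrt (3 * N)) *
        Real.exp (Real.pi * Real.sqrt (s * N / 3)) := by
  have hN_pos : (0 : ℝ) < N := Nat.cast_pos.2 hN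
  have hs_pos : (0 : ℝ) < s := Nat.cast_pos.2 hs
  set t : ℝ := Real.pi * Real.sqrt s / (2 * Real.sqrt (3 * N)) with ht_def
  have ht : 0 < t := by positivity
  have h_linear : 1 - Real.exp (-t) < t := by linarith [Real.add_one_lt_exp (neg_ne_zero.2 ht.ne')]
  calc ({k : Fin s → ℕ | k ≠ 0 ∧ norm1Vec k = N}.ncard : ℝ)
      ≤ {k : Fin s → ℕ | norm1Vec k = N}.ncard := by
        exact_mod_cast
          Set.ncard_le_ncard (Set.ofPred_subset_ofPred.2 fun _ => And.right)
            (finite_setOf_norm1Vec_eq s N)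
    _ ≤ (1 - Real.exp (-t)) * Real.exp (N * t + s * (Real.pi ^ 2 / (12 * t))) :=
        ncard_norm1Vec_eq_le ht hs N
    _ = (1 - Real.exp (-t)) * Real.exp (Real.pi * Real.sqrt (s * N / 3)) := by
        rw [mul_add_mul_pi_sq_div_eq hN_pos hs_pos ht_def]
    _ < t * Real.exp (Real.pi * Real.sqrt (s * N / 3)) := by gcongr

end MedianQMC
end
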